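/- Assume the pairs (𝓡₁, 𝓡₂) and (𝓡₁*, 𝓡₂*) are incommensurate, and let 𝓐_j be a finite set. Then every u_j ∈ L¹(Γ_𝓜; (ℝ³)^{𝓐_j}) is reconstructable along γ_j + 𝓡_j for Lebesgue-almost every γ_j ∈ Γ_j: that is, for almost every γ_j ∈ Γ_j, all G_𝓜 ∈ 𝓡_𝓜* and all α_j ∈ 𝓐_j, lim_{N→∞} (2N+1)^{−2} Σ_{R_j ∈ 𝓡_j(N)} e^{−i G_𝓜 · (γ_j + R_j)} u_j({γ_j + R_j}_𝓜, α_j) = û_j(G_𝓜, α_j). -/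

import Mathlib

open scoped Real BigOperators
open MeasureTheory Filter Topology Matrix

noncomputable section

/-- The 2×2 rotation matrix through angle `φ`. -/
def Rot (φ : ℝ) : Matrix (Fin 2) (Fin 2) ℝ :=
  !![Real.cos φ, -Real.sin φ; Real.sin φ, Real.cos φ]

/-- Euclidean norm on `ℝ²`. -/
def norm2 (v : Fin 2 → ℝ) : ℝ := Real.sqrt (v 0 ^ 2 + v 1 ^ 2)

/-- Euclidean norm on `ℝ³`. -/
def norm3 (v : Fin 3 → ℝ) : ℝ := Real.sqrt (v 0 ^ 2 + v 1 ^ 2 + v 2 ^ 2)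

/-- Cast an integer vector to a real vector. -/
def iv (n : Fin 2 → ℤ) : Fin 2 → ℝ := fun i => (n i : ℝ)

/-- The lattice `M ℤ²`. -/
def lat (M : Matrix (Fin 2) (Fin 2) ℝ) : Set (Fin 2 → ℝ) :=
  {v | ∃ n : Fin 2 → ℤ, v = M.mulVec (iv n)}

/-- The unit cell `M [0,1)²`. -/
def cell (M : Matrix (Fin 2) (Fin 2) ℝ) : Set (Fin 2 → ℝ) :=
  {v | ∃ t : Fin 2 → ℝ, (∀ i, t i ∈ Set.Ico (0 : ℝ) 1) ∧ v = M.mulVec t}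

/-- The reciprocal matrix `2π M⁻ᵀ`. -/
def recip (M : Matrix (Fin 2) (Fin 2) ℝ) : Matrix (Fin 2) (Fin 2) ℝ :=
  (2 * π) • (M⁻¹)ᵀ

/-- A pair of lattices with reciprocal-lattice matrices `B1`, `B2` is incommensurate iff
`G₁ + G₂ = 0` with `G_k` in the respective reciprocal lattice implies `G₁ = G₂ = 0`. -/
def Incommensurate (B1 B2 : Matrix (Fin 2) (Fin 2) ℝ) : Prop :=
  ∀ G1 ∈ lat B1, ∀ G2 ∈ lat B2, G1 + G2 = 0 → G1 = 0 ∧ G2 = 0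

/-- Euclidean distance from `v ∈ ℝ²` to the integer lattice `ℤ²`. -/
def distZ2 (v : Fin 2 → ℝ) : ℝ := ⨅ m : Fin 2 → ℤ, norm2 (v - iv m)

/-- `θ` is a `(q,K,σ)`-Diophantine 2D rotation. -/
def IsDiophantine (A : Matrix (Fin 2) (Fin 2) ℝ) (q K σ θ : ℝ) : Prop :=
  ∀ n : Fin 2 → ℤ, n ≠ 0 →
    K / norm2 (iv n) ^ (2 * σ) ≤ distZ2 ((q • (Aᵀ * Rot θ * (A⁻¹)ᵀ)).mulVec (iv n)) ∧
    K / norm2 (iv n) ^ (2 * σ) ≤ distZ2 ((q⁻¹ • (Aᵀ * Rot (-θ) * (A⁻¹)ᵀ)).mulVec (iv n))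

/-- The moiré length scale ratio `ρ_𝓜`. -/
def rhoM (q θ : ℝ) : ℝ :=
  (Real.sqrt ((Real.sqrt q - (Real.sqrt q)⁻¹) ^ 2 + 4 * Real.sin (θ / 2) ^ 2))⁻¹

/-- Riemann zeta function (for real `s > 1`, via its Dirichlet series). -/
def zetaR (s : ℝ) : ℝ := ∑' n : ℕ, ((n : ℝ) + 1) ^ (-s)

/-- Operator (spectral) norm of a 2×2 real matrix w.r.t. the Euclidean norm. -/
def opNorm2 (M : Matrix (Fin 2) (Fin 2) ℝ) : ℝ :=
  ⨆ x : {x : Fin 2 → ℝ // norm2 x ≤ 1}, norm2 (M.mulVec x.1)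

/-- Embedding `ℝ² ↪ ℝ³`, `x ↦ (x, 0)`. -/
def emb (x : Fin 2 → ℝ) : Fin 3 → ℝ := ![x 0, x 1, 0]

/-- Japanese bracket `⟨x⟩ = (1 + |x|²)^{1/2}` on `ℝ³`. -/
def jap3 (x : Fin 3 → ℝ) : ℝ := Real.sqrt (1 + norm3 x ^ 2)

/-- The region `ℝ² × [−L, L] ⊆ ℝ³`. -/
def slab (L : ℝ) : Set (Fin 3 → ℝ) := {x | x 2 ∈ Set.Icc (-L) L}

/-- Euclidean inner product on `ℝ²`. -/
def dot2 (a b : Fin 2 → ℝ) : ℝ := ∑ i, a i * b i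

/-- The index box `⟦−N, N⟧²`. -/
def box (N : ℕ) : Finset (Fin 2 → ℤ) :=
  Finset.Icc (fun _ => -(N : ℤ)) (fun _ => (N : ℤ))

/-- The normalized Dirichlet kernel `Δ_N^j` of the lattice `A_j ℤ²`. -/
def Dir (Aj : Matrix (Fin 2) (Fin 2) ℝ) (N : ℕ) (G : Fin 2 → ℝ) : ℂ :=
  (((2 * N + 1 : ℝ)) ^ 2)⁻¹ •
    ∑ n ∈ box N, Complex.exp (Complex.I * (dot2 G (Aj.mulVec (iv n)) : ℝ))

/-! ### Discrete Vitali covering and the maximal inequality -/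

theorem mem_box {N : ℕ} {n : Fin 2 → ℤ} : n ∈ box N ↔ ∀ i, |n i| ≤ (N : ℤ) := by
  simp only [box, Finset.mem_Icc, Pi.le_def, abs_le]
  exact ⟨fun h i => ⟨h.1 i, h.2 i⟩, fun h => ⟨fun i => (h i).1, fun i => (h i).2⟩⟩

theorem card_box (N : ℕ) : (box N).card = (2 * N + 1) ^ 2 := by
  have : (2 * (N:ℤ) + 1).toNat = 2 * N + 1 := by omega
  have h2 : ((N:ℤ) + 1 + N).toNat = 2 * N + 1 := by omega
  simp [box, Pi.card_Icc, h2]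

/-- translated box -/
def tbox (b : Fin 2 → ℤ) (N : ℕ) : Finset (Fin 2 → ℤ) := (box N).map (addLeftEmbedding b)

theorem mem_tbox {N : ℕ} {b n : Fin 2 → ℤ} : n ∈ tbox b N ↔ ∀ i, |n i - b i| ≤ (N : ℤ) := by
  simp only [tbox, Finset.mem_map, addLeftEmbedding_apply]
  constructor
  · rintro ⟨a, ha, rfl⟩ i
    simpa using mem_box.1 ha i
  · intro h
    exact ⟨n - b, mem_box.2 (fun i => by simpa using h i), by simp⟩

theorem mem_tbox_iff_closedBall {N : ℕ} {b n : Fin 2 → ℤ} :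
    n ∈ tbox b N ↔ n ∈ Metric.closedBall b (N : ℝ) := by
  rw [mem_tbox, Metric.mem_closedBall, dist_pi_le_iff (by positivity)]
  refine forall_congr' fun i => ?_
  rw [Int.dist_eq]
  exact_mod_cast Iff.rfl

theorem vitali_count (a : (Fin 2 → ℤ) → ENNReal) (l : ENNReal) (M L : ℕ)
    (t : Finset (Fin 2 → ℤ)) (ht : t ⊆ box L) (r : (Fin 2 → ℤ) → ℕ)
    (hr : ∀ n ∈ t, r n ≤ M)
    (h : ∀ n ∈ t, l * ((2 * r n + 1) ^ 2 : ℕ) ≤ ∑ m ∈ box (r n), a (n + m)) :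
    l * (t.card : ENNReal) ≤ 25 * ∑ m ∈ box (L + M), a m := by
  classical
  obtain ⟨u, hut, hdisj, hcov⟩ := Vitali.exists_disjoint_subfamily_covering_enlargement_closedBall
    (t : Set (Fin 2 → ℤ)) (fun n => n) (fun n => (r n : ℝ)) (M : ℝ)
    (fun n hn => by exact_mod_cast hr n hn) 5 (by norm_num)
  have hfin : u.Finite := t.finite_toSet.subset hut
  lift u to Finset (Fin 2 → ℤ) using hfin
  have hut' : u ⊆ t := by exact_mod_cast hut
  have hcard : t.card ≤ ∑ b ∈ u, 25 * (2 * r b + 1) ^ 2 := by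
    calc t.card ≤ (u.biUnion fun b => tbox b (5 * r b)).card := by
          apply Finset.card_le_card
          intro n hn
          obtain ⟨b, hb, hsub⟩ := hcov n hn
          refine Finset.mem_biUnion.2 ⟨b, hb, ?_⟩
          rw [mem_tbox_iff_closedBall]
          push_cast
          exact hsub (Metric.mem_closedBall_self (by positivity))
      _ ≤ ∑ b ∈ u, (tbox b (5 * r b)).card := Finset.card_biUnion_le
      _ ≤ _ := by
          apply Finset.sum_le_sum
          intro b _
          rw [tbox, Finset.card_map, card_box]
          nlinarith [Nat.zero_le (r b)]
  have hd : (u : Set (Fin 2 → ℤ)).PairwiseDisjoint fun b => tbox b (r b) := by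
    intro b hb c hc hbc
    have := hdisj hb hc hbc
    simp only [Function.onFun] at this ⊢
    rw [Finset.disjoint_left]
    intro n hn hn'
    exact Set.disjoint_left.1 this (mem_tbox_iff_closedBall.1 hn) (mem_tbox_iff_closedBall.1 hn')
  calc l * (t.card : ENNReal) ≤ l * ((∑ b ∈ u, 25 * (2 * r b + 1) ^ 2 : ℕ) : ENNReal) := by
        gcongr
    _ = 25 * ∑ b ∈ u, l * ((2 * r b + 1) ^ 2 : ℕ) := by
        push_cast
        simp only [Finset.mul_sum]
        refine Finset.sum_congr rfl fun b _ => by ring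
    _ ≤ 25 * ∑ b ∈ u, ∑ m ∈ tbox b (r b), a m := by
        gcongr with b hb
        rw [tbox, Finset.sum_map]
        exact h b (hut' hb)
    _ = 25 * ∑ m ∈ u.biUnion (fun b => tbox b (r b)), a m := by
        rw [Finset.sum_biUnion hd]
    _ ≤ _ := by
        gcongr
        intro n hn
        obtain ⟨b, hb, hn⟩ := Finset.mem_biUnion.1 hn
        rw [mem_box]
        intro i
        have h1 := mem_tbox.1 hn i
        have h2 := mem_box.1 (ht (hut' hb)) i
        have h3 := hr b (hut' hb)
        push_cast
        rw [abs_le] at *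
        omega

theorem maximal_fin {X : Type*} [MeasurableSpace X] [AddCommGroup X] [MeasurableAdd X]
    (μ : Measure X) [μ.IsAddLeftInvariant]
    (Φ : (Fin 2 → ℤ) →+ X) (f : X → ENNReal) (hf : Measurable f) (l : ENNReal) (M : ℕ) :
    l * μ {x | ∃ N ≤ M, l * ((2 * N + 1) ^ 2 : ℕ) ≤ ∑ n ∈ box N, f (Φ n + x)}
      ≤ 100 * ∫⁻ x, f x ∂μ := by
  classical
  set E := {x | ∃ N ≤ M, l * ((2 * N + 1) ^ 2 : ℕ) ≤ ∑ n ∈ box N, f (Φ n + x)} with hE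
  have hfm : ∀ n, Measurable fun x => f (Φ n + x) := fun n => hf.comp (measurable_const_add _)
  have hEm : MeasurableSet E := by
    have : E = ⋃ N ∈ Set.Iic M, {x | l * ((2 * N + 1) ^ 2 : ℕ) ≤ ∑ n ∈ box N, f (Φ n + x)} := by
      ext x; simp [hE]
    rw [this]
    refine MeasurableSet.biUnion (Set.to_countable _) fun N _ => ?_
    exact measurableSet_le measurable_const (Finset.measurable_fun_sum _ fun n _ => hfm n)
  have key : ∀ x, l * ∑ n ∈ box M, E.indicator (fun _ => (1 : ENNReal)) (Φ n + x)
      ≤ 25 * ∑ m ∈ box (M + M), f (Φ m + x) := by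
    intro x
    have : ∑ n ∈ box M, E.indicator (fun _ => (1 : ENNReal)) (Φ n + x)
        = (((box M).filter fun n => Φ n + x ∈ E).card : ENNReal) := by
      simp only [Set.indicator_apply]
      rw [Finset.sum_boole]
    rw [this]
    have hex : ∀ n : Fin 2 → ℤ, ∃ N : ℕ, Φ n + x ∈ E → N ≤ M ∧
        l * ((2 * N + 1) ^ 2 : ℕ) ≤ ∑ m ∈ box N, f (Φ m + (Φ n + x)) := by
      intro n
      by_cases h : Φ n + x ∈ E
      · obtain ⟨N, h1, h2⟩ := h
        exact ⟨N, fun _ => ⟨h1, h2⟩⟩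
      · exact ⟨0, fun h' => absurd h' h⟩
    choose r hr using hex
    refine vitali_count (fun n => f (Φ n + x)) l M M _ (Finset.filter_subset _ _) r ?_ ?_
    · intro n hn
      exact (hr n (Finset.mem_filter.1 hn).2).1
    · intro n hn
      refine (hr n (Finset.mem_filter.1 hn).2).2.trans (le_of_eq ?_)
      refine Finset.sum_congr rfl fun m _ => ?_
      rw [map_add, ← add_assoc, add_comm (Φ m)]
  have hint := lintegral_mono (μ := μ) key
  have hindm : Measurable (E.indicator (fun _ => (1 : ENNReal))) :=
    measurable_const.indicator hEm
  have hindm' : ∀ n, Measurable fun x => E.indicator (fun _ => (1 : ENNReal)) (Φ n + x) :=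
    fun n => hindm.comp (measurable_const_add _)
  rw [lintegral_const_mul _ (Finset.measurable_fun_sum _ fun n _ => hindm' n),
    lintegral_const_mul _ (Finset.measurable_fun_sum _ fun n _ => hfm n),
    lintegral_finsetSum _ (fun n _ => hindm' n),
    lintegral_finsetSum _ (fun n _ => hfm n)] at hint
  simp only [lintegral_add_left_eq_self (μ := μ)] at hint
  rw [lintegral_indicator_const hEm] at hint
  simp only [Finset.sum_const, card_box, nsmul_eq_mul, one_mul] at hint
  set c : ENNReal := (((2 * M + 1) ^ 2 : ℕ) : ENNReal) with hc
  have hc0 : c ≠ 0 := by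
    rw [hc]; exact_mod_cast (by positivity : (2 * M + 1) ^ 2 ≠ 0)
  have hct : c ≠ ⊤ := ENNReal.natCast_ne_top _
  rw [← ENNReal.mul_le_mul_iff_right hc0 hct]
  calc c * (l * μ E) = l * (c * μ E) := by ring
    _ ≤ _ := hint
    _ ≤ 25 * ((4 * c) * ∫⁻ x, f x ∂μ) := by
        gcongr
        rw [hc]
        norm_cast
        have h4 : (2 * (M + M) + 1) ^ 2 + (8 * M + 3) = 4 * (2 * M + 1) ^ 2 := by ring
        exact h4 ▸ Nat.le_add_right _ _
    _ = _ := by ring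

theorem maximal_ineq {X : Type*} [MeasurableSpace X] [AddCommGroup X] [MeasurableAdd X]
    (μ : Measure X) [μ.IsAddLeftInvariant]
    (Φ : (Fin 2 → ℤ) →+ X) (f : X → ENNReal) (hf : Measurable f) (l : ENNReal) :
    l * μ {x | ∃ N, l * ((2 * N + 1) ^ 2 : ℕ) ≤ ∑ n ∈ box N, f (Φ n + x)}
      ≤ 100 * ∫⁻ x, f x ∂μ := by
  have : {x | ∃ N, l * ((2 * N + 1) ^ 2 : ℕ) ≤ ∑ n ∈ box N, f (Φ n + x)} =
      ⋃ M : ℕ, {x | ∃ N ≤ M, l * ((2 * N + 1) ^ 2 : ℕ) ≤ ∑ n ∈ box N, f (Φ n + x)} := by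
    ext x
    simp only [Set.mem_ofPred_eq, Set.mem_iUnion]
    exact ⟨fun ⟨N, h⟩ => ⟨N, N, le_rfl, h⟩, fun ⟨_, N, _, h⟩ => ⟨N, h⟩⟩
  rw [this, Monotone.measure_iUnion, ENNReal.mul_iSup]
  · exact iSup_le fun M => maximal_fin μ Φ f hf l M
  · intro M M' hM x ⟨N, hN, h⟩
    exact ⟨N, hN.trans hM, h⟩

/-! ### The ergodic theorem on the torus -/

theorem mFourier_eq_toCircle (k : Fin 2 → ℤ) (x : UnitAddTorus (Fin 2)) :
    UnitAddTorus.mFourier k x = ((AddCircle.toCircle (∑ i, k i • x i) : Circle) : ℂ) := by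
  simp [UnitAddTorus.mFourier, Fin.prod_univ_two, Fin.sum_univ_two, fourier_apply,
    AddCircle.toCircle_add]

theorem mFourier_add_arg (k : Fin 2 → ℤ) (x y : UnitAddTorus (Fin 2)) :
    UnitAddTorus.mFourier k (x + y) = UnitAddTorus.mFourier k x * UnitAddTorus.mFourier k y := by
  simp only [mFourier_eq_toCircle, Pi.add_apply, smul_add, Finset.sum_add_distrib,
    AddCircle.toCircle_add, Circle.coe_mul]

theorem mFourier_zsmul_arg (k : Fin 2 → ℤ) (n : ℤ) (x : UnitAddTorus (Fin 2)) :
    UnitAddTorus.mFourier k (n • x) = UnitAddTorus.mFourier k x ^ n := by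
  simp only [mFourier_eq_toCircle, Pi.smul_apply]
  have : ∑ i, k i • n • x i = n • ∑ i, k i • x i := by
    rw [Finset.smul_sum]
    exact Finset.sum_congr rfl fun i _ => smul_comm _ _ _
  rw [this, AddCircle.toCircle_zsmul, Circle.coe_zpow]

theorem mFourier_norm_arg (k : Fin 2 → ℤ) (x : UnitAddTorus (Fin 2)) :
    ‖UnitAddTorus.mFourier k x‖ = 1 := by
  rw [mFourier_eq_toCircle]; exact Circle.norm_coe _

theorem mFourier_hom (k : Fin 2 → ℤ) (Φ : (Fin 2 → ℤ) →+ UnitAddTorus (Fin 2))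
    (n : Fin 2 → ℤ) :
    UnitAddTorus.mFourier k (Φ n) =
      ∏ i, UnitAddTorus.mFourier k (Φ (Pi.single i 1)) ^ (n i) := by
  have : n = n 0 • Pi.single 0 1 + n 1 • Pi.single 1 1 := by
    ext i; fin_cases i <;> simp
  conv_lhs => rw [this]
  rw [map_add, map_zsmul, map_zsmul, mFourier_add_arg, mFourier_zsmul_arg, mFourier_zsmul_arg,
    Fin.prod_univ_two]

theorem sum_zpow_eq (z : ℂ) (hz : z ≠ 0) (N : ℕ) :
    ∑ k ∈ Finset.Icc (-(N : ℤ)) N, z ^ k = z ^ (-(N : ℤ)) * ∑ k ∈ Finset.range (2 * N + 1), z ^ k := by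
  rw [Finset.mul_sum]
  symm
  refine Finset.sum_nbij' (fun k => (k : ℤ) - N) (fun k => (k + N).toNat) ?_ ?_ ?_ ?_ ?_
  · intro k hk; simp at hk ⊢; omega
  · intro k hk; simp at hk ⊢; omega
  · intro k hk; simp
  · intro k hk; simp at hk ⊢; omega
  · intro k hk
    rw [← zpow_natCast, ← zpow_add₀ hz]
    congr 1; ring

theorem norm_sum_zpow_le (z : ℂ) (hz : ‖z‖ = 1) (h1 : z ≠ 1) (N : ℕ) :
    ‖∑ k ∈ Finset.Icc (-(N : ℤ)) N, z ^ k‖ ≤ 2 / ‖z - 1‖ := by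
  have h0 : z ≠ 0 := by rintro rfl; simp at hz
  rw [sum_zpow_eq z h0, geom_sum_eq h1, norm_mul, norm_zpow, hz, _root_.one_zpow, one_mul, norm_div]
  gcongr
  calc ‖z ^ (2 * N + 1) - 1‖ ≤ ‖z ^ (2 * N + 1)‖ + ‖(1 : ℂ)‖ := norm_sub_le _ _
    _ = 2 := by rw [norm_pow, hz]; norm_num

theorem norm_sum_zpow_le' (z : ℂ) (hz : ‖z‖ = 1) (N : ℕ) :
    ‖∑ k ∈ Finset.Icc (-(N : ℤ)) N, z ^ k‖ ≤ 2 * N + 1 := by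
  refine (norm_sum_le _ _).trans ?_
  simp only [norm_zpow, hz, _root_.one_zpow, Finset.sum_const, Int.card_Icc, nsmul_eq_mul, mul_one]
  have : ((N:ℤ) + 1 - -N).toNat = 2 * N + 1 := by omega
  rw [this]; push_cast; rfl

theorem sum_box_prod (z : Fin 2 → ℂ) (N : ℕ) :
    ∑ n ∈ box N, ∏ i, z i ^ (n i) = ∏ i, ∑ k ∈ Finset.Icc (-(N : ℤ)) N, z i ^ k := by
  rw [Finset.prod_univ_sum]
  rfl

/-- the averages over boxes -/
def boxAvg {X : Type*} [Add X] (Φ : (Fin 2 → ℤ) → X) (f : X → ℂ) (N : ℕ) (x : X) : ℂ :=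
  ((2 * N + 1 : ℝ) ^ 2)⁻¹ • ∑ n ∈ box N, f (Φ n + x)

theorem norm_sum_box_le (z : Fin 2 → ℂ) (hz : ∀ i, ‖z i‖ = 1) (h1 : ∃ i, z i ≠ 1) (N : ℕ) :
    ∃ i, z i ≠ 1 ∧ ‖∑ n ∈ box N, ∏ i, z i ^ (n i)‖ ≤ 2 / ‖z i - 1‖ * (2 * N + 1) := by
  obtain ⟨i, hi⟩ := h1
  refine ⟨i, hi, ?_⟩
  rw [sum_box_prod, norm_prod, Fin.prod_univ_two]
  fin_cases i
  · exact mul_le_mul (norm_sum_zpow_le _ (hz 0) hi N) (norm_sum_zpow_le' _ (hz 1) N)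
      (norm_nonneg _) (by positivity)
  · rw [mul_comm]
    exact mul_le_mul (norm_sum_zpow_le _ (hz 1) hi N) (norm_sum_zpow_le' _ (hz 0) N)
      (norm_nonneg _) (by positivity)

theorem tendsto_char (z : Fin 2 → ℂ) (hz : ∀ i, ‖z i‖ = 1) (h1 : ∃ i, z i ≠ 1) :
    Tendsto (fun N : ℕ => ((2 * N + 1 : ℝ) ^ 2)⁻¹ • ∑ n ∈ box N, ∏ i, z i ^ (n i))
      atTop (𝓝 0) := by
  set C := ∑ i, 2 / ‖z i - 1‖ with hC
  have hlim : Tendsto (fun N : ℕ => C * (2 * N + 1 : ℝ)⁻¹) atTop (𝓝 0) := by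
    have : Tendsto (fun N : ℕ => (2 * N + 1 : ℝ)) atTop atTop :=
      tendsto_atTop_add_const_right _ _ (tendsto_natCast_atTop_atTop.const_mul_atTop (by norm_num))
    simpa using this.inv_tendsto_atTop.const_mul C
  refine squeeze_zero_norm (fun N => ?_) hlim
  obtain ⟨i, -, hi⟩ := norm_sum_box_le z hz h1 N
  have hiC : 2 / ‖z i - 1‖ ≤ C :=
    Finset.single_le_sum (f := fun i => 2 / ‖z i - 1‖) (fun i _ => by positivity)
      (Finset.mem_univ i)
  rw [norm_smul, norm_inv, norm_pow, Real.norm_of_nonneg (by positivity : (0:ℝ) ≤ 2 * N + 1)]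
  calc ((2 * N + 1 : ℝ) ^ 2)⁻¹ * ‖∑ n ∈ box N, ∏ i, z i ^ (n i)‖
      ≤ ((2 * N + 1 : ℝ) ^ 2)⁻¹ * (C * (2 * N + 1)) := by
        gcongr
        exact hi.trans (by gcongr)
    _ = _ := by
        have : (2 * N + 1 : ℝ) ≠ 0 := by positivity
        field_simp

instance torusProb : IsProbabilityMeasure (volume : Measure (UnitAddTorus (Fin 2))) := by
  constructor
  rw [volume_pi, Measure.pi_univ]
  simp

section
variable (Φ : (Fin 2 → ℤ) →+ UnitAddTorus (Fin 2))

theorem boxAvg_const {X : Type*} [Add X] (Ψ : (Fin 2 → ℤ) → X) (c : ℂ) (N : ℕ) (x : X) :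
    boxAvg Ψ (fun _ => c) N x = c := by
  have : ((2 * N + 1 : ℝ)) ≠ 0 := by positivity
  have h : ((2 * N + 1 : ℂ)) ≠ 0 := by exact_mod_cast this
  simp only [boxAvg, Finset.sum_const, card_box, nsmul_eq_mul, Complex.real_smul]
  push_cast
  field_simp

theorem tendsto_mFourier
    (hΦ : ∀ k : Fin 2 → ℤ, k ≠ 0 → ∃ i, UnitAddTorus.mFourier k (Φ (Pi.single i 1)) ≠ 1)
    (k : Fin 2 → ℤ) (x : UnitAddTorus (Fin 2)) :
    Tendsto (fun N => boxAvg Φ (UnitAddTorus.mFourier k) N x) atTop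
      (𝓝 (∫ y, UnitAddTorus.mFourier k y)) := by
  by_cases hk : k = 0
  · subst hk
    have h1 : ((UnitAddTorus.mFourier (0 : Fin 2 → ℤ) : C(UnitAddTorus (Fin 2), ℂ)) :
        UnitAddTorus (Fin 2) → ℂ) = fun _ => 1 := by
      rw [UnitAddTorus.mFourier_zero]; rfl
    simp only [h1, boxAvg_const]
    simp
  · have hint : ∫ y, UnitAddTorus.mFourier k y = 0 := by
      obtain ⟨i, hi⟩ := hΦ k hk
      have h := integral_add_left_eq_self (μ := (volume : Measure (UnitAddTorus (Fin 2))))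
        (fun y => UnitAddTorus.mFourier k y) (Φ (Pi.single i 1))
      simp only [mFourier_add_arg] at h
      rw [integral_const_mul] at h
      have h' : (UnitAddTorus.mFourier k (Φ (Pi.single i 1)) - 1) *
          ∫ y, UnitAddTorus.mFourier k y = 0 := by rw [sub_mul, h, one_mul, sub_self]
      exact (mul_eq_zero.1 h').resolve_left (sub_ne_zero.2 hi)
    rw [hint]
    have := (tendsto_char (fun i => UnitAddTorus.mFourier k (Φ (Pi.single i 1)))
      (fun i => mFourier_norm_arg _ _) (hΦ k hk)).mul_const (UnitAddTorus.mFourier k x)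
    rw [zero_mul] at this
    refine this.congr fun N => ?_
    simp only [boxAvg, mFourier_add_arg]
    rw [← Finset.sum_mul, smul_mul_assoc]
    simp only [← mFourier_hom]

theorem boxAvg_add (f g : UnitAddTorus (Fin 2) → ℂ) (N : ℕ) (x : UnitAddTorus (Fin 2)) :
    boxAvg Φ (fun y => f y + g y) N x = boxAvg Φ f N x + boxAvg Φ g N x := by
  simp only [boxAvg, Finset.sum_add_distrib, smul_add]

theorem boxAvg_smul (c : ℂ) (g : UnitAddTorus (Fin 2) → ℂ) (N : ℕ) (x : UnitAddTorus (Fin 2)) :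
    boxAvg Φ (fun y => c * g y) N x = c * boxAvg Φ g N x := by
  simp only [boxAvg, ← Finset.mul_sum, mul_smul_comm]

theorem continuousMap_integrable (f : C(UnitAddTorus (Fin 2), ℂ)) :
    Integrable f (volume : Measure (UnitAddTorus (Fin 2))) :=
  f.continuous.integrable_of_hasCompactSupport (HasCompactSupport.of_compactSpace _)

theorem tendsto_trig
    (hΦ : ∀ k : Fin 2 → ℤ, k ≠ 0 → ∃ i, UnitAddTorus.mFourier k (Φ (Pi.single i 1)) ≠ 1)
    (g : C(UnitAddTorus (Fin 2), ℂ))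
    (hg : g ∈ Submodule.span ℂ (Set.range (UnitAddTorus.mFourier (d := Fin 2))))
    (x : UnitAddTorus (Fin 2)) :
    Tendsto (fun N => boxAvg Φ g N x) atTop (𝓝 (∫ y, g y)) := by
  induction hg using Submodule.span_induction with
  | mem g h => obtain ⟨k, rfl⟩ := h; exact tendsto_mFourier Φ hΦ k x
  | zero =>
    have := boxAvg_const Φ 0
    simp only [ContinuousMap.coe_zero, Pi.zero_def, this]
    simp
  | add f g _ _ hf hg =>
    simp only [ContinuousMap.coe_add, Pi.add_def, boxAvg_add]
    rw [integral_add (continuousMap_integrable f) (continuousMap_integrable g)]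
    exact hf.add hg
  | smul c f _ hf =>
    simp only [ContinuousMap.coe_smul, Pi.smul_def, smul_eq_mul, boxAvg_smul]
    rw [integral_const_mul]
    exact hf.const_mul c

theorem exists_trig (f : UnitAddTorus (Fin 2) → ℂ) (hf : Integrable f) (ε : ENNReal) (hε : ε ≠ 0) :
    ∃ g ∈ Submodule.span ℂ (Set.range (UnitAddTorus.mFourier (d := Fin 2))),
      ∫⁻ x, ‖f x - g x‖ₑ ≤ ε := by
  have hε2 : ε / 2 ≠ 0 := by simpa using hε
  obtain ⟨g, hg, -⟩ := hf.exists_boundedContinuous_lintegral_sub_le hε2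
  obtain ⟨δ, hδ, hδε⟩ : ∃ δ : ℝ, 0 < δ ∧ ENNReal.ofReal δ ≤ ε / 2 := by
    rcases eq_or_ne (ε / 2) ⊤ with h | h
    · exact ⟨1, one_pos, by simp [h]⟩
    · exact ⟨(ε / 2).toReal, ENNReal.toReal_pos hε2 h, ENNReal.ofReal_toReal_le⟩
  have hmem : g.toContinuousMap ∈
      (Submodule.span ℂ (Set.range (UnitAddTorus.mFourier (d := Fin 2)))).topologicalClosure := by
    rw [UnitAddTorus.span_mFourier_closure_eq_top]; trivial
  rw [← SetLike.mem_coe, Submodule.topologicalClosure_coe, Metric.mem_closure_iff] at hmem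
  obtain ⟨h, hh, hd⟩ := hmem δ hδ
  refine ⟨h, hh, ?_⟩
  calc ∫⁻ x, ‖f x - h x‖ₑ ≤ ∫⁻ x, (‖f x - g x‖ₑ + ENNReal.ofReal δ) := by
        refine lintegral_mono fun x => ?_
        have : f x - h x = (f x - g x) + (g x - h x) := by ring
        rw [this]
        refine (enorm_add_le _ _).trans ?_
        gcongr
        rw [← ofReal_norm]
        apply ENNReal.ofReal_le_ofReal
        rw [← dist_eq_norm]
        exact (ContinuousMap.dist_apply_le_dist (f := g.toContinuousMap) (g := h) x).trans hd.le
    _ = (∫⁻ x, ‖f x - g x‖ₑ) + ENNReal.ofReal δ := by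
        rw [lintegral_add_right _ measurable_const]; simp
    _ ≤ ε / 2 + ε / 2 := add_le_add hg hδε
    _ = ε := ENNReal.add_halves ε
end

section
variable (Φ : (Fin 2 → ℤ) →+ UnitAddTorus (Fin 2))

theorem norm_boxAvg_le (h : UnitAddTorus (Fin 2) → ℂ) (ε : ℝ) (hε : 0 < ε) (N : ℕ)
    (x : UnitAddTorus (Fin 2))
    (hx : ∑ n ∈ box N, ‖h (Φ n + x)‖ₑ ≤ ENNReal.ofReal ε * ((2 * N + 1) ^ 2 : ℕ)) :
    ‖boxAvg Φ h N x‖ ≤ ε := by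
  have h1 : ∑ n ∈ box N, ‖h (Φ n + x)‖ ≤ ε * (2 * N + 1) ^ 2 := by
    have h2 : ∑ n ∈ box N, ‖h (Φ n + x)‖ₑ = ENNReal.ofReal (∑ n ∈ box N, ‖h (Φ n + x)‖) := by
      rw [ENNReal.ofReal_sum_of_nonneg (fun _ _ => norm_nonneg _)]
      simp only [ofReal_norm]
    rw [h2, ← ENNReal.ofReal_natCast, ← ENNReal.ofReal_mul hε.le,
      ENNReal.ofReal_le_ofReal_iff (by positivity)] at hx
    exact_mod_cast hx
  have h3 : (0:ℝ) < (2 * N + 1) ^ 2 := by positivity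
  rw [boxAvg, norm_smul, norm_inv, Real.norm_of_nonneg h3.le, inv_mul_le_iff₀ h3, mul_comm]
  exact (norm_sum_le _ _).trans h1

theorem ergodic_aux
    (hΦ : ∀ k : Fin 2 → ℤ, k ≠ 0 → ∃ i, UnitAddTorus.mFourier k (Φ (Pi.single i 1)) ≠ 1)
    (f : UnitAddTorus (Fin 2) → ℂ) (hf : Integrable f) (hm : Measurable f)
    (ε : ℝ) (hε : 0 < ε) :
    ∀ᵐ x, ∀ᶠ N in atTop, ‖boxAvg Φ f N x - ∫ y, f y‖ ≤ 3 * ε := by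
  rw [ae_iff]
  set B := {x | ¬ ∀ᶠ N in atTop, ‖boxAvg Φ f N x - ∫ y, f y‖ ≤ 3 * ε} with hB
  set l := ENNReal.ofReal ε with hl
  have hl0 : l ≠ 0 := by simpa [hl] using hε
  have main : ∀ δ : ENNReal, δ ≠ 0 → δ ≤ l → l * volume B ≤ 100 * δ := by
    intro δ hδ hδl
    obtain ⟨g, hg, hfg⟩ := exists_trig f hf δ hδ
    have hmeas : Measurable fun x => ‖f x - g x‖ₑ := (hm.sub g.continuous.measurable).enorm
    refine le_trans ?_ ((maximal_ineq volume Φ _ hmeas l).trans (by gcongr))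
    gcongr
    intro x hx
    by_contra hcon
    apply hx
    simp only [Set.mem_ofPred_eq, not_exists, not_le] at hcon
    have hlim := tendsto_trig Φ hΦ g hg x
    have hev := (tendsto_iff_norm_sub_tendsto_zero.1 hlim).eventually_le_const hε
    filter_upwards [hev] with N hN
    have h1 : ‖boxAvg Φ (fun y => f y - g y) N x‖ ≤ ε :=
      norm_boxAvg_le Φ _ ε hε N x (hcon N).le
    have h2 : ‖(∫ y, g y) - ∫ y, f y‖ ≤ ε := by
      rw [norm_sub_rev, ← integral_sub hf (continuousMap_integrable g)]
      have := (enorm_integral_le_lintegral_enorm (μ := volume) (fun y => f y - g y)).trans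
        (hfg.trans hδl)
      rw [← ofReal_norm, hl, ENNReal.ofReal_le_ofReal_iff hε.le] at this
      exact this
    have h3 : boxAvg Φ f N x = boxAvg Φ (fun y => f y - g y) N x + boxAvg Φ g N x := by
      rw [← boxAvg_add]; simp
    calc ‖boxAvg Φ f N x - ∫ y, f y‖
        = ‖boxAvg Φ (fun y => f y - g y) N x + (boxAvg Φ g N x - ∫ y, g y)
            + ((∫ y, g y) - ∫ y, f y)‖ := by rw [h3]; congr 1; ring
      _ ≤ ε + ε + ε := norm_add₃_le.trans (by gcongr)
      _ = 3 * ε := by ring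
  by_contra hne
  have hlB : l * volume B ≠ 0 := mul_ne_zero hl0 hne
  have hlBt : l * volume B ≠ ⊤ := ENNReal.mul_ne_top ENNReal.ofReal_ne_top (measure_ne_top _ _)
  have h := main (min l (l * volume B / 200)) (by
    rw [← pos_iff_ne_zero, lt_min_iff]
    exact ⟨pos_iff_ne_zero.2 hl0, ENNReal.div_pos hlB (by norm_num)⟩) (min_le_left _ _)
  have h' : l * volume B ≤ 100 * (l * volume B / 200) :=
    h.trans (by gcongr; exact min_le_right _ _)
  generalize l * volume B = c at *
  lift c to NNReal using hlBt
  have h'' : c ≤ 100 * (c / 200) := by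
    have h200 : ((c : ENNReal) / 200) = ((c / 200 : NNReal) : ENNReal) := by
      rw [ENNReal.coe_div (by norm_num)]; rfl
    rw [h200] at h'
    exact_mod_cast h'
  have hc : (0:ℝ) < c := by
    have : c ≠ 0 := by exact_mod_cast hlB
    exact_mod_cast pos_iff_ne_zero.2 this
  have : (c:ℝ) ≤ 100 * (c / 200) := by exact_mod_cast h''
  linarith

theorem ergodic_torus
    (hΦ : ∀ k : Fin 2 → ℤ, k ≠ 0 → ∃ i, UnitAddTorus.mFourier k (Φ (Pi.single i 1)) ≠ 1)
    (f : UnitAddTorus (Fin 2) → ℂ) (hf : Integrable f) :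
    ∀ᵐ x, Tendsto (fun N => boxAvg Φ f N x) atTop (𝓝 (∫ y, f y)) := by
  obtain ⟨g, hgm, hfg⟩ := hf.1
  have hg : Integrable g := hf.congr hfg
  have h1 : ∀ᵐ x : UnitAddTorus (Fin 2), ∀ n, f (Φ n + x) = g (Φ n + x) := by
    rw [ae_all_iff]
    intro n
    exact (measurePreserving_add_left volume (Φ n)).quasiMeasurePreserving.ae hfg
  have h2 : ∀ᵐ x, ∀ k : ℕ, ∀ᶠ N in atTop,
      ‖boxAvg Φ g N x - ∫ y, g y‖ ≤ 3 * (1 / ((k : ℝ) + 1)) := by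
    rw [ae_all_iff]
    intro k
    exact ergodic_aux Φ hΦ g hg hgm.measurable _ (by positivity)
  filter_upwards [h1, h2] with x hx1 hx2
  have e : ∀ N, boxAvg Φ f N x = boxAvg Φ g N x := fun N => by simp only [boxAvg, hx1]
  simp only [e]
  rw [integral_congr_ae hfg, Metric.tendsto_nhds]
  intro ε hε
  obtain ⟨k, hk⟩ := exists_nat_one_div_lt (show (0:ℝ) < ε / 3 by positivity)
  filter_upwards [hx2 k] with N hN
  rw [dist_eq_norm]
  linarith
end

/-! ### Transfer between the plane and the torus -/

/-- projection of the plane to the torus -/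
def torProj (t : Fin 2 → ℝ) : UnitAddTorus (Fin 2) := fun i => (t i : UnitAddCircle)

/-- representative in `[0,1)²` -/
def torRep (s : UnitAddTorus (Fin 2)) : Fin 2 → ℝ :=
  fun i => (AddCircle.equivIco (1 : ℝ) 0 (s i) : ℝ)

/-- the half open unit square -/
def icoBox : Set (Fin 2 → ℝ) := Set.pi Set.univ fun _ => Set.Ico (0 : ℝ) 1

theorem torRep_torProj (t : Fin 2 → ℝ) (ht : ∀ i, t i ∈ Set.Ico (0 : ℝ) 1) :
    torRep (torProj t) = t := by
  ext i
  simp only [torRep, torProj]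
  rw [AddCircle.coe_equivIco_mk_apply]
  simp [Int.fract_eq_self.2 (ht i)]

theorem torProj_add (s t : Fin 2 → ℝ) : torProj (s + t) = torProj s + torProj t := by
  ext i; simp [torProj]

theorem torProj_iv (n : Fin 2 → ℤ) : torProj (iv n) = 0 := by
  ext i
  simp only [torProj, iv, Pi.zero_apply]
  exact AddCircle.coe_eq_zero_iff (1:ℝ) |>.2 ⟨n i, by simp⟩

theorem measurable_torRep : Measurable torRep := by
  refine measurable_pi_lambda _ fun i => ?_
  exact measurable_subtype_coe.comp
    ((AddCircle.measurableEquivIco (1 : ℝ) 0).measurable.comp (measurable_pi_apply i))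

theorem torProj_mp (a : Fin 2 → ℝ) :
    MeasurePreserving torProj
      (volume.restrict (Set.pi Set.univ fun i => Set.Ioc (a i) (a i + 1))) volume := by
  rw [volume_pi, Measure.restrict_pi_pi]
  exact measurePreserving_pi _ _ fun i => AddCircle.measurePreserving_mk 1 (a i)

theorem ae_torProj {P : UnitAddTorus (Fin 2) → Prop} (h : ∀ᵐ s, P s) :
    ∀ᵐ t : Fin 2 → ℝ, P (torProj t) := by
  have h1 : ∀ n : Fin 2 → ℤ, ∀ᵐ t ∂(volume.restrict
      (Set.pi Set.univ fun i => Set.Ioc (iv n i) (iv n i + 1))), P (torProj t) :=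
    fun n => (torProj_mp (iv n)).quasiMeasurePreserving.ae h
  rw [← ae_restrict_iUnion_iff] at h1
  have : (⋃ n : Fin 2 → ℤ, Set.pi Set.univ fun i => Set.Ioc (iv n i) (iv n i + 1)) = Set.univ := by
    rw [Set.eq_univ_iff_forall]
    intro t
    rw [Set.mem_iUnion]
    refine ⟨fun i => ⌈t i⌉ - 1, fun i _ => ?_⟩
    simp only [iv, Set.mem_Ioc]
    push_cast
    constructor
    · linarith [Int.ceil_lt_add_one (t i)]
    · linarith [Int.le_ceil (t i)]
  rwa [this, Measure.restrict_univ] at h1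

theorem icoBox_ae : (Set.pi Set.univ fun _ : Fin 2 => Set.Ioc (0 : ℝ) (0 + 1)) =ᵐ[volume] icoBox := by
  rw [zero_add, icoBox, volume_pi]
  exact (Measure.univ_pi_Ioc_ae_eq_Icc (f := fun _ : Fin 2 => (0:ℝ)) (g := fun _ => 1)).trans
    (Measure.univ_pi_Ico_ae_eq_Icc (f := fun _ : Fin 2 => (0:ℝ)) (g := fun _ => 1)).symm

theorem measurableSet_icoBox : MeasurableSet icoBox :=
  MeasurableSet.univ_pi fun _ => measurableSet_Ico

theorem map_torRep : Measure.map torRep volume = volume.restrict icoBox := by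
  have h := (torProj_mp 0).map_eq
  have h0 : (volume.restrict (Set.pi Set.univ fun i =>
      Set.Ioc ((0 : Fin 2 → ℝ) i) ((0 : Fin 2 → ℝ) i + 1)) : Measure (Fin 2 → ℝ)) =
      volume.restrict icoBox := Measure.restrict_congr_set icoBox_ae
  rw [h0] at h
  rw [← h, Measure.map_map measurable_torRep (torProj_mp 0).measurable]
  have : torRep ∘ torProj =ᵐ[volume.restrict icoBox] id := by
    filter_upwards [ae_restrict_mem measurableSet_icoBox] with t ht
    exact torRep_torProj t fun i => ht i (Set.mem_univ i)
  rw [Measure.map_congr this, Measure.map_id]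

theorem mulVec_continuous (M : Matrix (Fin 2) (Fin 2) ℝ) :
    Continuous fun t : Fin 2 → ℝ => M.mulVec t :=
  continuous_const.matrix_mulVec continuous_id

theorem inv_mulVec_mulVec (M : Matrix (Fin 2) (Fin 2) ℝ) (hM : IsUnit M.det) (t : Fin 2 → ℝ) :
    M⁻¹.mulVec (M.mulVec t) = t := by
  rw [Matrix.mulVec_mulVec, Matrix.nonsing_inv_mul _ hM, Matrix.one_mulVec]

theorem mulVec_inv_mulVec (M : Matrix (Fin 2) (Fin 2) ℝ) (hM : IsUnit M.det) (t : Fin 2 → ℝ) :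
    M.mulVec (M⁻¹.mulVec t) = t := by
  rw [Matrix.mulVec_mulVec, Matrix.mul_nonsing_inv _ hM, Matrix.one_mulVec]

theorem cell_eq (M : Matrix (Fin 2) (Fin 2) ℝ) (hM : IsUnit M.det) :
    cell M = (fun t => M⁻¹.mulVec t) ⁻¹' icoBox := by
  ext v
  constructor
  · rintro ⟨t, ht, rfl⟩
    simp only [Set.mem_preimage, inv_mulVec_mulVec M hM]
    exact fun i _ => ht i
  · intro hv
    exact ⟨_, fun i => hv i (Set.mem_univ i), (mulVec_inv_mulVec M hM v).symm⟩

theorem measurableSet_cell (M : Matrix (Fin 2) (Fin 2) ℝ) (hM : IsUnit M.det) :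
    MeasurableSet (cell M) := by
  rw [cell_eq M hM]
  exact (mulVec_continuous _).measurable measurableSet_icoBox

theorem preimage_cell (M : Matrix (Fin 2) (Fin 2) ℝ) (hM : IsUnit M.det) :
    (fun t => M.mulVec t) ⁻¹' cell M = icoBox := by
  rw [cell_eq M hM, ← Set.preimage_comp]
  ext t
  simp only [Set.mem_preimage, Function.comp_apply, inv_mulVec_mulVec M hM]

theorem map_mulVec (M : Matrix (Fin 2) (Fin 2) ℝ) (hM : IsUnit M.det) :
    Measure.map (fun t => M.mulVec t) (volume : Measure (Fin 2 → ℝ)) =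
      ENNReal.ofReal |M.det⁻¹| • volume :=
  Real.map_matrix_volume_pi_eq_smul_volume_pi hM.ne_zero

theorem volume_icoBox : volume icoBox = 1 := by
  rw [icoBox, volume_pi_pi]; simp

theorem map_cell (M : Matrix (Fin 2) (Fin 2) ℝ) (hM : IsUnit M.det) :
    Measure.map (fun s => M.mulVec (torRep s)) volume =
      (volume (cell M))⁻¹ • volume.restrict (cell M) := by
  have hmeas := (mulVec_continuous M).measurable
  have h1 : Measure.map (fun s => M.mulVec (torRep s)) volume =
      Measure.map (fun t => M.mulVec t) (Measure.map torRep volume) :=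
    (Measure.map_map hmeas measurable_torRep).symm
  have h2 : Measure.map (fun t => M.mulVec t) (volume.restrict icoBox) =
      ENNReal.ofReal |M.det⁻¹| • volume.restrict (cell M) := by
    rw [← preimage_cell M hM, ← Measure.restrict_map hmeas (measurableSet_cell M hM),
      map_mulVec M hM, Measure.restrict_smul]
  rw [h1, map_torRep, h2]
  have h3 := congrArg (fun μ : Measure (Fin 2 → ℝ) => μ Set.univ) h2
  simp only [Measure.map_apply hmeas MeasurableSet.univ, Set.preimage_univ,
    Measure.restrict_apply_univ, volume_icoBox, Measure.smul_apply, smul_eq_mul] at h3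
  rw [ENNReal.eq_inv_of_mul_eq_one_left h3.symm]

theorem ae_mulVec (M : Matrix (Fin 2) (Fin 2) ℝ) (hM : IsUnit M.det) {P : (Fin 2 → ℝ) → Prop}
    (h : ∀ᵐ t, P t) : ∀ᵐ t, P (M.mulVec t) := by
  have hq : Measure.QuasiMeasurePreserving (fun t : Fin 2 → ℝ => M.mulVec t) volume volume := by
    refine ⟨(mulVec_continuous M).measurable, ?_⟩
    rw [map_mulVec M hM]
    exact Measure.smul_absolutelyContinuous
  exact hq.ae h

/-- The translation homomorphism. -/
def torHom (M : Matrix (Fin 2) (Fin 2) ℝ) : (Fin 2 → ℤ) →+ UnitAddTorus (Fin 2) where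
  toFun n := torProj (M.mulVec (iv n))
  map_zero' := by
    have h : iv 0 = 0 := by ext i; simp [iv]
    rw [h, Matrix.mulVec_zero]; ext i; simp [torProj]
  map_add' m n := by
    have h : iv (m + n) = iv m + iv n := by ext i; simp [iv]
    rw [h, Matrix.mulVec_add, torProj_add]

theorem frac_eq (AM : Matrix (Fin 2) (Fin 2) ℝ) (hM : IsUnit AM.det) (x y : Fin 2 → ℝ)
    (h1 : x - y ∈ lat AM) (h2 : y ∈ cell AM) :
    AM.mulVec (torRep (torProj (AM⁻¹.mulVec x))) = y := by
  obtain ⟨n, hn⟩ := h1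
  obtain ⟨t, ht, rfl⟩ := h2
  have hx : x = AM.mulVec (t + iv n) := by
    rw [Matrix.mulVec_add, ← hn]; abel
  rw [hx, inv_mulVec_mulVec AM hM, torProj_add, torProj_iv, add_zero, torRep_torProj t ht]

theorem mFourier_torProj (k : Fin 2 → ℤ) (t : Fin 2 → ℝ) :
    UnitAddTorus.mFourier k (torProj t) = Complex.exp ((2 * π * dot2 (iv k) t : ℝ) * Complex.I) := by
  simp only [UnitAddTorus.mFourier, ContinuousMap.coe_mk, torProj, fourier_coe_apply,
    Fin.prod_univ_two, ← Complex.exp_add, dot2, Fin.sum_univ_two, iv]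
  congr 1
  push_cast
  ring

theorem dot2_mulVec (B A : Matrix (Fin 2) (Fin 2) ℝ) (h : Bᵀ * A = (2 * π) • 1)
    (k t : Fin 2 → ℝ) : dot2 (B.mulVec k) (A.mulVec t) = 2 * π * dot2 k t := by
  have : ∀ a b, dot2 a b = a ⬝ᵥ b := fun a b => rfl
  rw [this, this, dotProduct_comm, Matrix.dotProduct_mulVec, ← Matrix.mulVec_transpose,
    Matrix.mulVec_mulVec, h, Matrix.smul_mulVec, Matrix.one_mulVec, smul_dotProduct, smul_eq_mul,
    dotProduct_comm]

theorem recip_transpose_mul (A : Matrix (Fin 2) (Fin 2) ℝ) (h : IsUnit A.det) :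
    (recip A)ᵀ * A = (2 * π) • 1 := by
  rw [recip, Matrix.transpose_smul, Matrix.transpose_transpose, Matrix.smul_mul,
    Matrix.nonsing_inv_mul _ h]

theorem transpose_mul_recip (A : Matrix (Fin 2) (Fin 2) ℝ) (h : IsUnit A.det) :
    Aᵀ * recip A = (2 * π) • 1 := by
  have := congrArg Matrix.transpose (recip_transpose_mul A h)
  simpa using this

theorem det_recip (A : Matrix (Fin 2) (Fin 2) ℝ) (h : IsUnit A.det) : IsUnit (recip A).det := by
  have h1 := congrArg Matrix.det (transpose_mul_recip A h)
  rw [Matrix.det_mul, Matrix.det_smul, Matrix.det_one] at h1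
  rw [isUnit_iff_ne_zero]
  intro h0
  rw [h0] at h1
  have := Real.pi_pos
  have : (2 * π) ^ Fintype.card (Fin 2) * 1 ≠ 0 := by positivity
  exact this (by rw [← h1]; ring)

theorem det_Rot (φ : ℝ) : (Rot φ).det = 1 := by
  simp only [Rot, Matrix.det_fin_two_of]
  nlinarith [Real.sin_sq_add_cos_sq φ]

theorem mulVec_iv_eq_zero (B : Matrix (Fin 2) (Fin 2) ℝ) (h : IsUnit B.det) (k : Fin 2 → ℤ)
    (hk : B.mulVec (iv k) = 0) : k = 0 := by
  have h1 := inv_mulVec_mulVec B h (iv k)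
  rw [hk, Matrix.mulVec_zero] at h1
  ext i
  have := congrFun h1 i
  simp only [iv, Pi.zero_apply] at this ⊢
  exact_mod_cast this.symm

theorem iv_sub (m n : Fin 2 → ℤ) : iv (m - n) = iv m - iv n := by ext i; simp [iv]
theorem iv_neg (m : Fin 2 → ℤ) : iv (-m) = - iv m := by ext i; simp [iv]

theorem nonres (A1 A2 B1 B2 BM : Matrix (Fin 2) (Fin 2) ℝ)
    (h1 : IsUnit A1.det) (h2 : IsUnit A2.det)
    (hB1 : B1 = recip A1) (hB2 : B2 = recip A2) (hBM : BM = B1 - B2)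
    (hinc : Incommensurate B1 B2)
    (j : Fin 2) (Aj : Matrix (Fin 2) (Fin 2) ℝ) (hAj : Aj = ![A1, A2] j)
    (k l : Fin 2 → ℤ) (hkl : BM.mulVec (iv k) = (recip Aj).mulVec (iv l)) : k = 0 := by
  rw [hBM, Matrix.sub_mulVec] at hkl
  fin_cases j
  · have hA : Aj = A1 := hAj
    subst hA
    rw [← hB1] at hkl
    have := (hinc (B1.mulVec (iv (k - l))) ⟨_, rfl⟩ (B2.mulVec (iv (-k))) ⟨_, rfl⟩ (by
      rw [iv_sub, iv_neg, Matrix.mulVec_sub, Matrix.mulVec_neg, ← hkl]; abel)).2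
    have := mulVec_iv_eq_zero B2 (hB2 ▸ det_recip A2 h2) _ this
    simpa using this
  · have hA : Aj = A2 := hAj
    subst hA
    rw [← hB2] at hkl
    have := (hinc (B1.mulVec (iv k)) ⟨_, rfl⟩ (B2.mulVec (iv (-k - l))) ⟨_, rfl⟩ (by
      rw [iv_sub, iv_neg, Matrix.mulVec_sub, Matrix.mulVec_neg, ← hkl]; abel)).1
    exact mulVec_iv_eq_zero B1 (hB1 ▸ det_recip A1 h1) _ this

theorem eq_recip_of_dot (A : Matrix (Fin 2) (Fin 2) ℝ) (h : IsUnit A.det) (v : Fin 2 → ℝ)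
    (l : Fin 2 → ℤ)
    (hl : ∀ i, dot2 v (A.mulVec (iv (Pi.single i 1))) = 2 * π * l i) :
    v = (recip A).mulVec (iv l) := by
  have key : Aᵀ.mulVec v = (2 * π) • iv l := by
    ext i
    have hi := hl i
    have h1 : iv (Pi.single i 1) = Pi.single i 1 := by
      ext a; by_cases hh : a = i
      · subst hh; simp [iv]
      · simp [iv, hh]
    rw [h1, Matrix.mulVec_single_one] at hi
    rw [Pi.smul_apply, smul_eq_mul, iv, ← hi]
    simp only [Matrix.mulVec, dotProduct, dot2, Matrix.transpose_apply, Matrix.col_apply]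
    exact Finset.sum_congr rfl fun a _ => mul_comm _ _
  have h2 : IsUnit Aᵀ.det := by rwa [Matrix.det_transpose]
  rw [← inv_mulVec_mulVec Aᵀ h2 v, key, recip, Matrix.smul_mulVec, Matrix.mulVec_smul,
    Matrix.transpose_nonsing_inv]

/-- Proposition: almost sure reconstructability. -/
theorem almost_sure_reconstructability (θ q : ℝ) (hq : 0 < q)
    (A A1 A2 B1 B2 BM AM : Matrix (Fin 2) (Fin 2) ℝ)
    (hA : IsUnit A.det)
    (hA1 : A1 = (Real.sqrt q)⁻¹ • (Rot (-(θ / 2)) * A))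
    (hA2 : A2 = Real.sqrt q • (Rot (θ / 2) * A))
    (hB1 : B1 = recip A1) (hB2 : B2 = recip A2)
    (hBM : BM = B1 - B2) (hBMinv : IsUnit BM.det)
    (hAM : AM = recip BM)
    (hinc : Incommensurate B1 B2) (hincstar : Incommensurate A1 A2)
    (FracM : (Fin 2 → ℝ) → (Fin 2 → ℝ))
    (hFracM : ∀ x : Fin 2 → ℝ, x - FracM x ∈ lat AM ∧ FracM x ∈ cell AM)
    -- sublattice labels and the displacement u_j ∈ L¹(Γ_𝓜; (ℝ³)^{𝓐_j})
    (𝓐 : Type) [Fintype 𝓐]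
    (u : (Fin 2 → ℝ) → 𝓐 → Fin 3 → ℝ)
    (hu : ∀ (α : 𝓐) (i : Fin 3), IntegrableOn (fun x => u x α i) (cell AM))
    (j : Fin 2) (Aj : Matrix (Fin 2) (Fin 2) ℝ) (hAj : Aj = ![A1, A2] j) :
    ∀ᵐ γ ∂(volume.restrict (cell Aj)), ∀ (m : Fin 2 → ℤ) (α : 𝓐),
      Tendsto
        (fun N : ℕ => ((2 * N + 1 : ℝ) ^ 2)⁻¹ •
          ∑ n ∈ box N,
            Complex.exp (-(dot2 (BM.mulVec (iv m)) (γ + Aj.mulVec (iv n)) : ℝ) * Complex.I) •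
              (fun i : Fin 3 => (u (FracM (γ + Aj.mulVec (iv n))) α i : ℂ)))
        atTop
        (𝓝 (fun i : Fin 3 =>
          ⨍ x in cell AM,
            Complex.exp (-(dot2 (BM.mulVec (iv m)) x : ℝ) * Complex.I) * (u x α i : ℂ))) := by
  have hsq : 0 < Real.sqrt q := Real.sqrt_pos.2 hq
  have hA0 : A.det ≠ 0 := hA.ne_zero
  have hA1u : IsUnit A1.det := by
    rw [hA1, Matrix.det_smul, Matrix.det_mul, det_Rot, isUnit_iff_ne_zero]
    have : (Real.sqrt q)⁻¹ ≠ 0 := by positivity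
    simp [hA0, hsq.ne']
  have hA2u : IsUnit A2.det := by
    rw [hA2, Matrix.det_smul, Matrix.det_mul, det_Rot, isUnit_iff_ne_zero]
    simp [hA0, hsq.ne']
  have hAju : IsUnit Aj.det := by
    rw [hAj]; fin_cases j
    · exact hA1u
    · exact hA2u
  have hAMu : IsUnit AM.det := hAM ▸ det_recip BM hBMinv
  have hBA : BMᵀ * AM = (2 * π) • 1 := hAM ▸ transpose_mul_recip BM hBMinv
  have hdot : ∀ k t, dot2 (BM.mulVec k) (AM.mulVec t) = 2 * π * dot2 k t :=
    dot2_mulVec BM AM hBA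
  set Φ := torHom (AM⁻¹ * Aj) with hΦdef
  have hΦapp : ∀ n, Φ n = torProj (AM⁻¹.mulVec (Aj.mulVec (iv n))) := by
    intro n
    rw [Matrix.mulVec_mulVec]; rfl
  have hΦ : ∀ k : Fin 2 → ℤ, k ≠ 0 → ∃ i, UnitAddTorus.mFourier k (Φ (Pi.single i 1)) ≠ 1 := by
    intro k hk
    by_contra! hcon
    have hex : ∀ i, ∃ l : ℤ, dot2 (BM.mulVec (iv k)) (Aj.mulVec (iv (Pi.single i 1))) =
        2 * π * l := by
      intro i
      have h := hcon i
      rw [hΦapp, mFourier_torProj, ← hdot, mulVec_inv_mulVec AM hAMu, Complex.exp_eq_one_iff] at h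
      obtain ⟨l, hl⟩ := h
      refine ⟨l, ?_⟩
      have hl' : ((dot2 (BM.mulVec (iv k)) (Aj.mulVec (iv (Pi.single i 1))) : ℝ) : ℂ) =
          ((2 * π * l : ℝ) : ℂ) := by
        apply mul_right_cancel₀ Complex.I_ne_zero
        rw [hl]; push_cast; ring
      exact_mod_cast hl'
    choose l hl using hex
    exact hk (nonres A1 A2 B1 B2 BM hA1u hA2u hB1 hB2 hBM hinc j Aj hAj k l
      (eq_recip_of_dot Aj hAju _ l hl))
  apply ae_restrict_of_ae
  rw [ae_all_iff]
  intro m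
  rw [ae_all_iff]
  intro α
  simp only [tendsto_pi_nhds]
  rw [ae_all_iff]
  intro i
  set g : (Fin 2 → ℝ) → ℂ := fun x =>
    Complex.exp (-(dot2 (BM.mulVec (iv m)) x : ℝ) * Complex.I) * (u x α i : ℂ) with hg
  have hgint : IntegrableOn g (cell AM) := by
    have h1 : IntegrableOn (fun x => (u x α i : ℂ)) (cell AM) := (hu α i).ofReal
    refine h1.bdd_mul (c := 1) ?_ ?_
    · apply Continuous.aestronglyMeasurable
      have : Continuous fun x : Fin 2 → ℝ => dot2 (BM.mulVec (iv m)) x := by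
        unfold dot2; fun_prop
      fun_prop
    · refine ae_of_all _ fun x => ?_
      rw [← Complex.ofReal_neg, Complex.norm_exp_ofReal_mul_I]
  have hcell : volume (cell AM) ≠ 0 := by
    intro h0
    have h1 := congrArg (fun μ : Measure (Fin 2 → ℝ) => μ Set.univ) (map_cell AM hAMu)
    have hme : Measurable fun s => AM.mulVec (torRep s) :=
      (mulVec_continuous AM).measurable.comp measurable_torRep
    simp only [Measure.map_apply hme MeasurableSet.univ, Set.preimage_univ, measure_univ,
      Measure.smul_apply, Measure.restrict_apply_univ, h0, smul_zero] at h1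
    exact one_ne_zero h1
  have hme : Measurable fun s => AM.mulVec (torRep s) :=
    (mulVec_continuous AM).measurable.comp measurable_torRep
  have hgint' : Integrable g (Measure.map (fun s => AM.mulVec (torRep s)) volume) := by
    rw [map_cell AM hAMu]
    exact hgint.smul_measure (ENNReal.inv_ne_top.2 hcell)
  have hF : Integrable (fun s => g (AM.mulVec (torRep s))) := hgint'.comp_measurable hme
  have hFint : ∫ s, g (AM.mulVec (torRep s)) = ⨍ x in cell AM, g x := by
    rw [← integral_map hme.aemeasurable hgint'.1, map_cell AM hAMu, average,
      Measure.restrict_apply_univ]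
  have herg := ae_mulVec AM⁻¹ (by
    rw [Matrix.det_nonsing_inv]; exact hAMu.ringInverse)
    (ae_torProj (ergodic_torus Φ hΦ _ hF))
  rw [hFint] at herg
  filter_upwards [herg] with γ hγ
  refine hγ.congr fun N => ?_
  simp only [boxAvg, Pi.smul_apply, Finset.sum_apply]
  congr 1
  refine Finset.sum_congr rfl fun n _ => ?_
  rw [hΦapp, ← torProj_add, ← Matrix.mulVec_add, add_comm (Aj.mulVec (iv n))]
  obtain ⟨h1, h2⟩ := hFracM (γ + Aj.mulVec (iv n))
  rw [frac_eq AM hAMu _ _ h1 h2]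
  simp only [hg, smul_eq_mul]
  congr 1
  obtain ⟨p, hp⟩ := h1
  set x := γ + Aj.mulVec (iv n)
  have hx : dot2 (BM.mulVec (iv m)) x =
      dot2 (BM.mulVec (iv m)) (FracM x) + 2 * π * dot2 (iv m) (iv p) := by
    rw [← hdot, ← hp]
    simp only [dot2, ← Finset.sum_add_distrib, Pi.sub_apply]
    exact Finset.sum_congr rfl fun a _ => by ring
  rw [hx, Complex.exp_eq_exp_iff_exists_int]
  refine ⟨m 0 * p 0 + m 1 * p 1, ?_⟩
  simp only [dot2, iv, Fin.sum_univ_two]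
  push_cast
  ring

end
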